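/- Let N ≥ 2 be a fixed integer and 1 ≤ n ≤ N−1 a fixed integer, and for 0 < p < 1 define G(p) = n/((N−n+1) p (1−p)) · Σ_{k=0}^{n-1} ((1−n)_k/(N−n+2)_k) (p/(p−1))^k. Then lim_{p→0⁺} p·G(p) = n/(N−n+1) and lim_{p→1⁻} (1−p)^n·G(p) = n!/((N−n+1)_n); that is, the relative Fisher information of the Kravchuk polynomials behaves as G(p) ~ n/((N−n+1)p) when p → 0 and as G(p) ~ n!/((N−n+1)_n (1−p)^n) when p → 1. -/

import Mathlib

/-- Pochhammer symbol `(a)_k = a(a+1)⋯(a+k-1)`. -/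
noncomputable def poch (a : ℝ) (k : ℕ) : ℝ := ∏ i ∈ Finset.range k, (a + i)

theorem poch_zero (a : ℝ) : poch a 0 = 1 := by
  simp [poch]

theorem poch_succ_left (a : ℝ) (k : ℕ) : poch a (k + 1) = a * poch (a + 1) k := by
  simp only [poch, Finset.prod_range_succ', Nat.cast_zero, add_zero, mul_comm a]
  congr 1
  refine Finset.prod_congr rfl fun i _ => ?_
  push_cast
  ring

theorem poch_neg_self (m : ℕ) : poch (-(m : ℝ)) m = (-1) ^ m * (m.factorial : ℝ) := by
  induction m with
  | zero => simp [poch_zero]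
  | succ m ih =>
    have h : -((m + 1 : ℕ) : ℝ) + 1 = -(m : ℝ) := by
      push_cast
      ring
    rw [poch_succ_left, h, ih, Nat.factorial_succ]
    push_cast
    ring

/-- Clearing the pole at `p = 1` of a polynomial of degree at most `m` in `p / (p - 1)`. -/
theorem one_sub_pow_mul_sum_div_pow (c : ℕ → ℝ) (m : ℕ) {p : ℝ} (hp : p ≠ 1) :
    (1 - p) ^ m * ∑ k ∈ Finset.range (m + 1), c k * (p / (p - 1)) ^ k =
      ∑ k ∈ Finset.range (m + 1), c k * (-p) ^ k * (1 - p) ^ (m - k) := by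
  have h : 1 - p ≠ 0 := sub_ne_zero.mpr hp.symm
  rw [Finset.mul_sum]
  refine Finset.sum_congr rfl fun k hk => ?_
  have hkm : k ≤ m := Nat.lt_succ_iff.mp (Finset.mem_range.mp hk)
  have hdiv : p / (p - 1) = -p / (1 - p) := by
    rw [← neg_sub 1 p, div_neg, neg_div]
  rw [hdiv, div_pow, ← Nat.sub_add_cancel hkm, pow_add, Nat.add_sub_cancel]
  field_simp

theorem tendsto_mul_sum_div_pow_zero (a b : ℝ) (c : ℕ → ℝ) (m : ℕ) :
    Filter.Tendsto
      (fun p : ℝ => p * (b / (a * p * (1 - p)) *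
        ∑ k ∈ Finset.range (m + 1), c k * (p / (p - 1)) ^ k))
      (nhdsWithin 0 (Set.Ioo 0 1)) (nhds (b / a * c 0)) := by
  have hcont : ContinuousAt (fun p : ℝ => b / a / (1 - p) *
      ∑ k ∈ Finset.range (m + 1), c k * (p / (p - 1)) ^ k) 0 := by
    fun_prop (disch := norm_num)
  have hlim := hcont.tendsto.mono_left (nhdsWithin_le_nhds (s := Set.Ioo 0 1))
  have hval : b / a / (1 - 0) * ∑ k ∈ Finset.range (m + 1), c k * ((0 : ℝ) / (0 - 1)) ^ k =
      b / a * c 0 := by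
    simp [Finset.sum_range_succ']
  rw [hval] at hlim
  refine hlim.congr' ?_
  filter_upwards [self_mem_nhdsWithin] with p hp
  have h0 : p ≠ 0 := hp.1.ne'
  rw [← mul_assoc]
  congr 1
  field_simp

theorem tendsto_one_sub_pow_mul_sum_div_pow_one (a b : ℝ) (c : ℕ → ℝ) (m : ℕ) :
    Filter.Tendsto
      (fun p : ℝ => (1 - p) ^ (m + 1) * (b / (a * p * (1 - p)) *
        ∑ k ∈ Finset.range (m + 1), c k * (p / (p - 1)) ^ k))
      (nhdsWithin 1 (Set.Ioo 0 1)) (nhds (b / a * (c m * (-1) ^ m))) := by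
  have hcont : ContinuousAt (fun p : ℝ => b / a / p *
      ∑ k ∈ Finset.range (m + 1), c k * (-p) ^ k * (1 - p) ^ (m - k)) 1 := by
    fun_prop (disch := norm_num)
  have hlim := hcont.tendsto.mono_left (nhdsWithin_le_nhds (s := Set.Ioo 0 1))
  have hval : b / a / 1 *
      ∑ k ∈ Finset.range (m + 1), c k * (-1) ^ k * ((1 : ℝ) - 1) ^ (m - k) =
        b / a * (c m * (-1) ^ m) := by
    rw [Finset.sum_range_succ, Finset.sum_eq_zero]
    · simp
    · intro k hk
      rw [sub_self, zero_pow (Nat.sub_ne_zero_of_lt (Finset.mem_range.mp hk)), mul_zero]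
  rw [hval] at hlim
  refine hlim.congr' ?_
  filter_upwards [self_mem_nhdsWithin] with p hp
  have h1 : 1 - p ≠ 0 := (sub_pos.mpr hp.2).ne'
  rw [← one_sub_pow_mul_sum_div_pow c m hp.2.ne, ← mul_assoc, ← mul_assoc]
  congr 1
  rw [pow_succ]
  field_simp

/-- Asymptotics of the relative Fisher information of the Kravchuk polynomials:
`G(p) ~ n/((N-n+1)p)` as `p → 0⁺` and `G(p) ~ n!/((N-n+1)_n (1-p)^n)` as `p → 1⁻`. -/
theorem kravchuk_fisher_p_asymptotics
    (N : ℕ) (hN : 2 ≤ N) (n : ℕ) (hn1 : 1 ≤ n) (hnN : n ≤ N - 1) :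
    Filter.Tendsto
      (fun p : ℝ => p *
        ((n : ℝ) / (((N : ℝ) - n + 1) * p * (1 - p)) *
          ∑ k ∈ Finset.range n,
            poch (1 - (n : ℝ)) k / poch ((N : ℝ) - n + 2) k * (p / (p - 1)) ^ k))
      (nhdsWithin 0 (Set.Ioo 0 1)) (nhds ((n : ℝ) / ((N : ℝ) - n + 1))) ∧
    Filter.Tendsto
      (fun p : ℝ => (1 - p) ^ n *
        ((n : ℝ) / (((N : ℝ) - n + 1) * p * (1 - p)) *
          ∑ k ∈ Finset.range n,
            poch (1 - (n : ℝ)) k / poch ((N : ℝ) - n + 2) k * (p / (p - 1)) ^ k))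
      (nhdsWithin 1 (Set.Ioo 0 1))
      (nhds ((n.factorial : ℝ) / poch ((N : ℝ) - n + 1) n)) := by
  obtain ⟨m, rfl⟩ : ∃ m, n = m + 1 := ⟨n - 1, by omega⟩
  set a : ℝ := (N : ℝ) - (m + 1 : ℕ) + 1 with ha
  have ha1 : (N : ℝ) - (m + 1 : ℕ) + 2 = a + 1 := by
    rw [ha]
    ring
  rw [ha1]
  refine ⟨?_, ?_⟩
  · simpa [poch_zero] using tendsto_mul_sum_div_pow_zero a ((m + 1 : ℕ) : ℝ)
      (fun k => poch (1 - ((m + 1 : ℕ) : ℝ)) k / poch (a + 1) k) m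
  · have h := tendsto_one_sub_pow_mul_sum_div_pow_one a ((m + 1 : ℕ) : ℝ)
      (fun k => poch (1 - ((m + 1 : ℕ) : ℝ)) k / poch (a + 1) k) m
    have hm : 1 - ((m + 1 : ℕ) : ℝ) = -(m : ℝ) := by
      push_cast
      ring
    have hsq : ((-1 : ℝ) ^ m) * (-1) ^ m = 1 := by
      rw [← mul_pow]
      norm_num
    convert h using 2
    rw [hm, poch_neg_self, poch_succ_left, Nat.factorial_succ,
      div_mul_eq_mul_div (_ * _) _ ((-1) ^ m), mul_right_comm, hsq, one_mul,
      div_mul_div_comm, Nat.cast_mul]
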